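/- arXiv:2306.02638 — 4 statements merged into one kernel-verified Lean document; each statement's English description precedes it below -/
import Mathlib

section
/- Let Z be a Banach space over 𝕂 (𝕂 = ℝ or ℂ) and let u ∈ Z with ‖u‖ = 1. Then for every z ∈ Z, V(Z,u,z) = conv{ φ(z) : φ is an extreme point of the closed unit ball of Z*, φ(u) = 1 }. -/
open Filter Topology Metric

/-!
The states at `u` form a weak-* compact convex set, and `V(Z, u, z)` is its image under evaluation
at `z`, a weak-* continuous real-linear map into the finite-dimensional space `𝕜`. Krein–Milman
only yields a closure, which must be removed. If `f : X → E` is continuous and linear, `E` is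
finite-dimensional and `K ⊆ X` is compact and convex, suppose that some `f x` with `x ∈ K` were
outside `conv f(ext K)`. A nonzero functional `g` on `E` then satisfies `g ≤ g (f x)` on
`f(ext K)`, hence on `f(K)` by Krein–Milman. The points of `K` where `g ∘ f` is maximal form an
exposed face containing `x`, on which `f` varies only along `ker g`, so induction on `dim E`
represents `f x` by extreme points of that face, which are extreme in `K`: a contradiction.

Finally, extreme states are extreme in the whole dual ball because `1` is an extreme point of the
unit disc of `𝕜`.
-/

theorem eq_of_apply_eq_of_ker_projection_eq {R M N : Type*} [Ring R] [AddCommGroup M]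
    [AddCommGroup N] [Module R M] [Module R N] {g : M →ₗ[R] N} {p : M →ₗ[R] g.ker}
    (hp : ∀ w : g.ker, p w = w) {x y : M} (hgxy : g x = g y) (hpxy : p x = p y) : x = y := by
  have hmem : x - y ∈ g.ker := by rw [LinearMap.mem_ker, map_sub, hgxy, sub_self]
  have hzero : (⟨x - y, hmem⟩ : g.ker) = 0 := by
    rw [← hp ⟨x - y, hmem⟩, map_sub, hpxy, sub_self]
  exact sub_eq_zero.1 (congrArg Subtype.val hzero)

section Convexity

variable {E : Type*} [NormedAddCommGroup E] [NormedSpace ℝ E] [FiniteDimensional ℝ E]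

theorem exists_ne_zero_eqOn_of_interior_eq_empty {C : Set E} (hC : Convex ℝ C)
    (hne : C.Nonempty) (hint : interior C = ∅) :
    ∃ g : StrongDual ℝ E, g ≠ 0 ∧ ∀ y ∈ C, ∀ y' ∈ C, g y = g y' := by
  have hspan : vectorSpan ℝ C ≠ ⊤ := by
    rwa [Ne, ← AffineSubspace.affineSpan_eq_top_iff_vectorSpan_eq_top_of_nonempty ℝ E E hne,
      ← hC.interior_nonempty_iff_affineSpan_eq_top, Set.not_nonempty_iff_eq_empty]
  obtain ⟨g, hg, hker⟩ := Submodule.exists_le_ker_of_lt_top _ hspan.lt_top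
  refine ⟨g.toContinuousLinearMap, by simpa using hg, fun y hy y' hy' => sub_eq_zero.1 ?_⟩
  simpa using! hker (vsub_mem_vectorSpan ℝ hy hy')

theorem exists_ne_zero_forall_le_of_notMem {C : Set E} (hC : Convex ℝ C) (hne : C.Nonempty)
    {x : E} (hx : x ∉ C) : ∃ g : StrongDual ℝ E, g ≠ 0 ∧ ∀ y ∈ C, g y ≤ g x := by
  obtain hint | hint := (interior C).eq_empty_or_nonempty
  · obtain ⟨g, hg, hconst⟩ := exists_ne_zero_eqOn_of_interior_eq_empty hC hne hint
    obtain ⟨y₀, hy₀⟩ := hne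
    obtain hle | hle := le_total (g y₀) (g x)
    · exact ⟨g, hg, fun y hy => (hconst y hy y₀ hy₀).trans_le hle⟩
    · refine ⟨-g, neg_ne_zero.2 hg, fun y hy => neg_le_neg ?_⟩
      exact hle.trans_eq (hconst y₀ hy₀ y hy)
  · exact geometric_hahn_banach_of_nonempty_interior_point hC (fun h => hx (interior_subset h)) hint

variable {X : Type*} [AddCommGroup X] [Module ℝ X] [TopologicalSpace X] [T2Space X]
  [IsTopologicalAddGroup X] [ContinuousSMul ℝ X] [LocallyConvexSpace ℝ X] {K : Set X}

theorem apply_le_of_forall_extremePoints_le (hK : IsCompact K) (hconv : Convex ℝ K)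
    (g : StrongDual ℝ X) {c : ℝ} (hg : ∀ y ∈ K.extremePoints ℝ, g y ≤ c) {x : X} (hx : x ∈ K) :
    g x ≤ c := by
  rw [← closure_convexHull_extremePoints hK hconv] at hx
  exact closure_minimal (convexHull_min hg (convex_halfSpace_le g.isLinear c))
    (isClosed_le g.continuous continuous_const) hx

theorem apply_mem_convexHull_image_extremePoints (hK : IsCompact K) (hconv : Convex ℝ K)
    (f : X →L[ℝ] E) {x : X} (hx : x ∈ K) :
    f x ∈ convexHull ℝ (f '' K.extremePoints ℝ) := by
  induction hn : Module.finrank ℝ E using Nat.strong_induction_on generalizing E K with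
  | _ n ih =>
  by_contra hfx
  obtain ⟨g, hg, hle⟩ := exists_ne_zero_forall_le_of_notMem (convex_convexHull ℝ _)
    ((hK.extremePoints_nonempty ⟨x, hx⟩).image f).convexHull hfx
  have hmax : ∀ y ∈ K, g (f y) ≤ g (f x) := fun y hy =>
    apply_le_of_forall_extremePoints_le hK hconv (g.comp f)
      (fun e he => hle _ (subset_convexHull ℝ _ (Set.mem_image_of_mem f he))) hy
  let F : Set X := (g.comp f).toExposed K
  have hF : IsExposed ℝ K F := ContinuousLinearMap.toExposed.isExposed
  have hgF : ∀ y ∈ F, g (f y) = g (f x) := fun y hy => (hmax y hy.1).antisymm (hy.2 x hx)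
  have hdim : Module.finrank ℝ g.ker < n :=
    hn ▸ Submodule.finrank_lt
      (mt LinearMap.ker_eq_top.1 fun h => hg (ContinuousLinearMap.coe_injective h))
  obtain ⟨p, hp⟩ := g.ker_closedComplemented_of_finiteDimensional_range
  have hpx : p (f x) ∈ convexHull ℝ (p '' (f '' F.extremePoints ℝ)) := by
    rw [Set.image_image]
    exact ih _ hdim (hF.isCompact hK) (hF.convex hconv) (p.comp f) ⟨hx, hmax⟩ rfl
  obtain ⟨y, hy, hpy⟩ := (p.isLinear.image_convexHull _).symm ▸ hpx
  have hgy : g y = g (f x) := by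
    refine convexHull_min ?_ (convex_hyperplane g.isLinear (g (f x))) hy
    rintro _ ⟨e, he, rfl⟩
    exact hgF e he.1
  have hyx : y = f x := eq_of_apply_eq_of_ker_projection_eq (p := p.toLinearMap) hp hgy hpy
  refine hfx (hyx ▸ convexHull_mono (Set.image_mono ?_) hy)
  exact hF.isExtreme.extremePoints_subset_extremePoints

theorem image_eq_convexHull_image_extremePoints (hK : IsCompact K) (hconv : Convex ℝ K)
    (f : X →L[ℝ] E) : f '' K = convexHull ℝ (f '' K.extremePoints ℝ) := by
  refine Set.Subset.antisymm ?_ ?_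
  · rintro _ ⟨x, hx, rfl⟩
    exact apply_mem_convexHull_image_extremePoints hK hconv f hx
  · exact convexHull_min (Set.image_mono extremePoints_subset) (hconv.is_linear_image f.isLinear)

-- The topology of `X` need not come from `Y`: the case of interest is a dual space, with `X`
-- carrying the weak-* topology and `Y` the norm.
theorem image_preimage_eq_convexHull_image_preimage_extremePoints {Y : Type*} [AddCommGroup Y]
    [Module ℝ Y] (e : X ≃ₗ[ℝ] Y) {S : Set Y} (hS : IsCompact (e ⁻¹' S)) (hconv : Convex ℝ S)
    (f : X →L[ℝ] E) : f '' (e ⁻¹' S) = convexHull ℝ (f '' (e ⁻¹' S.extremePoints ℝ)) := by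
  have hext : e ⁻¹' S.extremePoints ℝ = (e ⁻¹' S).extremePoints ℝ := by
    simpa only [e.image_symm_eq_preimage] using image_extremePoints e.symm S
  rw [hext]
  exact image_eq_convexHull_image_extremePoints hS (hconv.linear_preimage e.toLinearMap) f

end Convexity

section StateSpace

variable {𝕜 : Type*} [RCLike 𝕜] {Z : Type*} [SeminormedAddCommGroup Z] [NormedSpace 𝕜 Z]

variable (𝕜) in
/-- The state space of `Z` at `u`: the functionals of norm at most one with value `1` at `u`.
When `‖u‖ = 1` its members have norm exactly one; the inequality is what makes convexity and
weak-* compactness visible. -/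
def stateSpace (u : Z) : Set (StrongDual 𝕜 Z) :=
  {φ ∈ closedBall 0 1 | φ u = 1}

theorem mem_stateSpace_iff {u : Z} (hu : ‖u‖ = 1) {φ : StrongDual 𝕜 Z} :
    φ ∈ stateSpace 𝕜 u ↔ ‖φ‖ = 1 ∧ φ u = 1 := by
  refine ⟨fun ⟨hφ, hφu⟩ => ⟨(mem_closedBall_zero_iff.1 hφ).antisymm ?_, hφu⟩,
    fun ⟨hφ, hφu⟩ => ⟨mem_closedBall_zero_iff.2 hφ.le, hφu⟩⟩
  simpa [hφu, hu] using φ.le_opNorm u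

variable (𝕜) in
theorem convex_stateSpace (u : Z) : Convex ℝ (stateSpace 𝕜 u) := by
  refine (convex_closedBall 0 1).inter fun φ (hφ : φ u = 1) ψ (hψ : ψ u = 1) a b _ _ hab => ?_
  change (a • φ + b • ψ) u = 1
  simp [hφ, hψ, ← add_smul, hab]

variable (𝕜) in
theorem isCompact_toStrongDual_preimage_stateSpace (u : Z) :
    IsCompact (WeakDual.toStrongDual ⁻¹' stateSpace 𝕜 u) :=
  (WeakDual.isCompact_closedBall (0 : StrongDual 𝕜 Z) 1).inter_right
    (isClosed_singleton.preimage (WeakDual.eval_continuous u))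

theorem isExtreme_closedBall_stateSpace {u : Z} (hu : ‖u‖ ≤ 1) :
    IsExtreme ℝ (closedBall 0 1) (stateSpace 𝕜 u) := by
  have hball : ∀ φ ∈ closedBall (0 : StrongDual 𝕜 Z) 1, φ u ∈ closedBall (0 : 𝕜) 1 := fun φ hφ =>
    mem_closedBall_zero_iff.2 <|
      φ.le_of_opNorm_le_of_le (mem_closedBall_zero_iff.1 hφ) hu |>.trans_eq (one_mul 1)
  have hone : (1 : 𝕜) ∈ (closedBall (0 : 𝕜) 1).extremePoints ℝ :=
    StrictConvexSpace.sphere_subset_extremePoints_closedBall 0 one_ne_zero (by simp)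
  refine ⟨fun φ hφ => hφ.1, fun φ hφ ψ hψ χ hχ hseg => ⟨hφ, ?_⟩⟩
  obtain ⟨a, b, ha, hb, hab, rfl⟩ := hseg
  exact hone.2 (hball φ hφ) (hball ψ hψ) ⟨a, b, ha, hb, hab, by simpa using hχ.2⟩

theorem mem_extremePoints_stateSpace_iff {u : Z} (hu : ‖u‖ ≤ 1) {φ : StrongDual 𝕜 Z} :
    φ ∈ (stateSpace 𝕜 u).extremePoints ℝ ↔
      φ ∈ (closedBall (0 : StrongDual 𝕜 Z) 1).extremePoints ℝ ∧ φ u = 1 := by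
  rw [(isExtreme_closedBall_stateSpace hu).extremePoints_eq]
  exact ⟨fun ⟨hφ, hext⟩ => ⟨hext, hφ.2⟩, fun ⟨hext, hφu⟩ => ⟨⟨hext.1, hφu⟩, hext⟩⟩

theorem image_stateSpace_eq_convexHull {E : Type*} [NormedAddCommGroup E] [NormedSpace ℝ E]
    [FiniteDimensional ℝ E] (f : WeakDual 𝕜 Z →L[ℝ] E) (u : Z) :
    f '' (WeakDual.toStrongDual ⁻¹' stateSpace 𝕜 u) =
      convexHull ℝ (f '' (WeakDual.toStrongDual ⁻¹' (stateSpace 𝕜 u).extremePoints ℝ)) := by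
  have : LocallyConvexSpace ℝ (WeakDual 𝕜 Z) :=
    (WeakDual.withSeminorms 𝕜 Z).toLocallyConvexSpace
  let e : WeakDual 𝕜 Z ≃ₗ[ℝ] StrongDual 𝕜 Z := WeakDual.toStrongDual.restrictScalars ℝ
  exact image_preimage_eq_convexHull_image_preimage_extremePoints e
    (isCompact_toStrongDual_preimage_stateSpace 𝕜 u) (convex_stateSpace 𝕜 u) f

end StateSpace

theorem numerical_range_eq_convexHull_extremePoints_general {𝕜 : Type*} [RCLike 𝕜] {Z : Type*}
    [SeminormedAddCommGroup Z] [NormedSpace 𝕜 Z] (u : Z) (hu : ‖u‖ = 1) (z : Z) :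
    {α : 𝕜 | ∃ φ : Z →L[𝕜] 𝕜, ‖φ‖ = 1 ∧ φ u = 1 ∧ φ z = α} =
      convexHull ℝ {α : 𝕜 | ∃ φ ∈ Set.extremePoints ℝ (Metric.closedBall (0 : Z →L[𝕜] 𝕜) 1),
        φ u = 1 ∧ φ z = α} := by
  let ev : WeakDual 𝕜 Z →L[ℝ] 𝕜 := (WeakBilin.eval (topDualPairing 𝕜 Z) z).restrictScalars ℝ
  have himage := image_stateSpace_eq_convexHull ev u
  simp only [Set.image, Set.mem_preimage, mem_stateSpace_iff hu,
    mem_extremePoints_stateSpace_iff hu.le, and_assoc] at himage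
  exact himage

/-- The abstract numerical range `V(Z,u,z)` equals the convex hull of the values `φ z`
where `φ` runs over the extreme points of the dual unit ball with `φ u = 1`. -/
theorem numerical_range_eq_convexHull_extremePoints {𝕜 : Type*} [RCLike 𝕜] {Z : Type*}
    [NormedAddCommGroup Z] [NormedSpace 𝕜 Z] [CompleteSpace Z]
    (u : Z) (hu : ‖u‖ = 1) (z : Z) :
    {α : 𝕜 | ∃ φ : Z →L[𝕜] 𝕜, ‖φ‖ = 1 ∧ φ u = 1 ∧ φ z = α} =
      convexHull ℝ {α : 𝕜 | ∃ φ ∈ Set.extremePoints ℝ (Metric.closedBall (0 : Z →L[𝕜] 𝕜) 1),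
        φ u = 1 ∧ φ z = α} :=
  numerical_range_eq_convexHull_extremePoints_general u hu z
end

section
/- Let Z be a Banach space over 𝕂 (𝕂 = ℝ or ℂ), let u ∈ Z with ‖u‖ = 1, and let Λ be a subset of the closed unit ball of Z* that is one-norming for Z. Then for every z ∈ Z, V(Z,u,z) = conv{ λ ∈ 𝕂 : there exists a sequence (ψ_n) in Λ with |ψ_n(u)| → 1 and ψ_n(z)·conj(ψ_n(u)) → λ }. -/
open Filter Topology Metric

/-!
The pairs `(ψ u, ψ z)` with `ψ ∈ Λ` have a compact closure `C` in `𝕜 × 𝕜`, and the set of limits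
is the image of `{(p, q) ∈ C | |p| = 1}` under `(p, q) ↦ q * conj p`. By Banach–Alaoglu each
point of `C` is `(φ u, φ z)` for some `φ` in the dual unit ball; multiplying `φ` by `conj p`
turns `q * conj p` into an element of the numerical range. Conversely, since `Λ` is one-norming,
for each scalar `a` there is a point `(p, q) ∈ C` with `‖u + a z‖ ≤ |p + a q|`. Take `a = t c`
and let `t` tend to zero: the first order terms show that `x ↦ re (c x)` is at least as large at
some limit as at any given point of the numerical range. As this holds for every `c` and the
convex hull of the compact set of limits is closed, Hahn–Banach separation concludes.
-/

lemma convexHull_eq_biUnion_image_stdSimplex {𝕜 E : Type*} [Field 𝕜] [LinearOrder 𝕜]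
    [IsStrictOrderedRing 𝕜] [AddCommGroup E] [Module 𝕜 E] [FiniteDimensional 𝕜 E] (s : Set E) :
    convexHull 𝕜 s = ⋃ k ∈ Set.Iic (Module.finrank 𝕜 E + 1),
      (fun p : (Fin k → 𝕜) × (Fin k → E) => ∑ i, p.1 i • p.2 i) ''
        (stdSimplex 𝕜 (Fin k) ×ˢ Set.univ.pi fun _ => s) := by
  ext x
  simp only [Set.mem_iUnion, Set.mem_Iic, exists_prop]
  constructor
  · intro hx
    obtain ⟨ι, _, y, w, hy, hind, hw, hw1, rfl⟩ := eq_pos_convex_span_of_mem_convexHull hx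
    let e := Fintype.equivFin ι
    have hcard : Fintype.card ι ≤ Module.finrank 𝕜 E + 1 :=
      hind.card_le_finrank_succ.trans (Nat.succ_le_succ (Submodule.finrank_le _))
    exact ⟨Fintype.card ι, hcard, (w ∘ e.symm, y ∘ e.symm),
      ⟨⟨fun i => (hw _).le, (e.symm.sum_comp w).trans hw1⟩, fun i _ => hy ⟨_, rfl⟩⟩,
      e.symm.sum_comp fun i => w i • y i⟩
  · rintro ⟨k, -, ⟨w, y⟩, ⟨hw, hy⟩, rfl⟩
    exact (convex_convexHull 𝕜 s).sum_mem (fun i _ => hw.1 i) hw.2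
      fun i _ => subset_convexHull 𝕜 s (hy i trivial)

lemma isCompact_convexHull {E : Type*} [AddCommGroup E] [Module ℝ E] [TopologicalSpace E]
    [ContinuousAdd E] [ContinuousSMul ℝ E] [FiniteDimensional ℝ E] {s : Set E}
    (hs : IsCompact s) : IsCompact (convexHull ℝ s) := by
  rw [convexHull_eq_biUnion_image_stdSimplex]
  exact (Set.finite_Iic _).isCompact_biUnion fun k _ =>
    ((isCompact_stdSimplex ℝ _).prod (isCompact_univ_pi fun _ => hs)).image (by fun_prop)

section Scalars

variable {𝕜 : Type*} [RCLike 𝕜]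

lemma mem_convexHull_of_forall_exists_re_le {s : Set 𝕜} (hs : IsCompact s) {α : 𝕜}
    (h : ∀ c : 𝕜, ∃ β ∈ s, RCLike.re (c * α) ≤ RCLike.re (c * β)) : α ∈ convexHull ℝ s := by
  rw [← RCLike.iInter_halfSpaces_eq (𝕜 := 𝕜) (convex_convexHull ℝ s)
    (isCompact_convexHull hs).isClosed]
  refine Set.mem_iInter.2 fun f => ?_
  have apply_eq (x : 𝕜) : f x = f 1 * x := by simpa [mul_comm] using f.map_smul x 1
  obtain ⟨β, hβ, hle⟩ := h (f 1)
  exact ⟨β, subset_convexHull ℝ s hβ, by simpa only [apply_eq α, apply_eq β] using hle⟩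

lemma continuous_snd_mul_conj_fst :
    Continuous fun p : 𝕜 × 𝕜 => p.2 * (starRingEnd 𝕜) p.1 :=
  continuous_snd.mul (RCLike.continuous_conj.comp continuous_fst)

lemma norm_add_mul_sq (a p q : 𝕜) :
    ‖p + a * q‖ ^ 2 =
      ‖p‖ ^ 2 + 2 * RCLike.re (a * (q * (starRingEnd 𝕜) p)) + (‖a‖ * ‖q‖) ^ 2 := by
  rw [norm_add_sq (𝕜 := 𝕜), RCLike.inner_apply, norm_mul, mul_assoc]

end Scalars

lemma isCompact_image_apply_closedBall {𝕜 Z : Type*} [NontriviallyNormedField 𝕜] [ProperSpace 𝕜]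
    [SeminormedAddCommGroup Z] [NormedSpace 𝕜 Z] (u z : Z) (r : ℝ) :
    IsCompact ((fun φ : Z →L[𝕜] 𝕜 => (φ u, φ z)) '' closedBall 0 r) :=
  (WeakDual.isCompact_closedBall (𝕜 := 𝕜) (E := Z) 0 r).image
    ((WeakDual.eval_continuous u).prodMk (WeakDual.eval_continuous z))

section NumericalRange

variable {𝕜 Z : Type*} [RCLike 𝕜] [SeminormedAddCommGroup Z] [NormedSpace 𝕜 Z]
  {Λ : Set (Z →L[𝕜] 𝕜)} {u : Z}

variable (𝕜) in
/-- The abstract numerical range `V(Z,u,z)`. -/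
def numericalRange (u z : Z) : Set 𝕜 :=
  {α | ∃ φ : Z →L[𝕜] 𝕜, ‖φ‖ = 1 ∧ φ u = 1 ∧ φ z = α}

/-- The limits of `ψ_n z * conj (ψ_n u)` along sequences in `Λ` with `|ψ_n u| → 1`, the set whose
convex hull is to be the numerical range. -/
def limitRange (Λ : Set (Z →L[𝕜] 𝕜)) (u z : Z) : Set 𝕜 :=
  {α | ∃ ψ : ℕ → Z →L[𝕜] 𝕜, (∀ n, ψ n ∈ Λ) ∧
    Tendsto (fun n => ‖ψ n u‖) atTop (𝓝 1) ∧
    Tendsto (fun n => ψ n z * (starRingEnd 𝕜) (ψ n u)) atTop (𝓝 α)}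

/-- One-norming subsets of the closed dual unit ball. The bound on `Λ` makes the supremum of reals
in `norm_eq_sSup` a genuine one. -/
structure IsOneNorming (Λ : Set (Z →L[𝕜] 𝕜)) : Prop where
  subset_closedBall : Λ ⊆ closedBall 0 1
  norm_eq_sSup : ∀ w : Z, ‖w‖ = sSup ((fun φ : Z →L[𝕜] 𝕜 => ‖φ w‖) '' Λ)

/-- The closure of the joint range of `u` and `z` on `Λ`, which replaces sequences in `Λ` by points
of a compact subset of `𝕜 × 𝕜`. -/
def closedJointRange (Λ : Set (Z →L[𝕜] 𝕜)) (u z : Z) : Set (𝕜 × 𝕜) :=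
  closure ((fun φ => (φ u, φ z)) '' Λ)

lemma numericalRange_eq_image (hu : ‖u‖ ≤ 1) (z : Z) :
    numericalRange 𝕜 u z =
      (fun φ : Z →L[𝕜] 𝕜 => φ z) '' (closedBall 0 1 ∩ {φ | φ u = 1}) := by
  ext α
  constructor
  · rintro ⟨φ, hφ, hφu, rfl⟩
    exact ⟨φ, ⟨by simp [hφ], hφu⟩, rfl⟩
  · rintro ⟨φ, ⟨hφ, hφu : φ u = 1⟩, rfl⟩
    have one_le_norm : 1 ≤ ‖φ‖ := by simpa [hφu] using φ.unit_le_opNorm u hu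
    exact ⟨φ, (mem_closedBall_zero_iff.1 hφ).antisymm one_le_norm, hφu, rfl⟩

lemma convex_numericalRange (hu : ‖u‖ ≤ 1) (z : Z) : Convex ℝ (numericalRange 𝕜 u z) := by
  have isLinearMap_apply (x : Z) : IsLinearMap ℝ fun φ : Z →L[𝕜] 𝕜 => φ x :=
    ⟨fun _ _ => rfl, fun _ _ => rfl⟩
  rw [numericalRange_eq_image hu]
  exact ((convex_closedBall 0 1).inter
    ((convex_singleton 1).is_linear_preimage (isLinearMap_apply u))).is_linear_image
      (isLinearMap_apply z)

lemma closedJointRange_subset_image_closedBall (hΛ : Λ ⊆ closedBall 0 1) (u z : Z) :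
    closedJointRange Λ u z ⊆ (fun φ : Z →L[𝕜] 𝕜 => (φ u, φ z)) '' closedBall 0 1 :=
  closure_minimal (Set.image_mono hΛ) (isCompact_image_apply_closedBall u z 1).isClosed

lemma isCompact_closedJointRange (hΛ : Λ ⊆ closedBall 0 1) (u z : Z) :
    IsCompact (closedJointRange Λ u z) :=
  (isCompact_image_apply_closedBall u z 1).of_isClosed_subset isClosed_closure
    (closedJointRange_subset_image_closedBall hΛ u z)

lemma norm_le_of_mem_closedJointRange (hΛ : Λ ⊆ closedBall 0 1) {z : Z} {p : 𝕜 × 𝕜}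
    (hp : p ∈ closedJointRange Λ u z) : ‖p.1‖ ≤ ‖u‖ ∧ ‖p.2‖ ≤ ‖z‖ := by
  obtain ⟨φ, hφ, rfl⟩ := closedJointRange_subset_image_closedBall hΛ u z hp
  have norm_apply_le (x : Z) : ‖φ x‖ ≤ ‖x‖ := by
    simpa using φ.le_of_opNorm_le (mem_closedBall_zero_iff.1 hφ) x
  exact ⟨norm_apply_le u, norm_apply_le z⟩

lemma limitRange_eq_image (hΛ : Λ ⊆ closedBall 0 1) (u z : Z) :
    limitRange Λ u z = (fun p : 𝕜 × 𝕜 => p.2 * (starRingEnd 𝕜) p.1) ''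
      (closedJointRange Λ u z ∩ {p | ‖p.1‖ = 1}) := by
  ext α
  constructor
  · rintro ⟨ψ, hψ, hψu, hψα⟩
    obtain ⟨p, hp, k, hk, hlim⟩ := (isCompact_closedJointRange hΛ u z).tendsto_subseq
      fun n => subset_closure ⟨ψ n, hψ n, rfl⟩
    refine ⟨p, ⟨hp, ?_⟩, ?_⟩
    · exact tendsto_nhds_unique ((continuous_fst.norm.tendsto p).comp hlim)
        (hψu.comp hk.tendsto_atTop)
    · exact tendsto_nhds_unique ((continuous_snd_mul_conj_fst.tendsto p).comp hlim)
        (hψα.comp hk.tendsto_atTop)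
  · rintro ⟨p, ⟨hp, hp1 : ‖p.1‖ = 1⟩, rfl⟩
    obtain ⟨x, hx, hlim⟩ := mem_closure_iff_seq_limit.1 hp
    choose ψ hψ hψx using hx
    obtain rfl : (fun n => (ψ n u, ψ n z)) = x := funext hψx
    exact ⟨ψ, hψ, hp1 ▸ (continuous_fst.norm.tendsto p).comp hlim,
      (continuous_snd_mul_conj_fst.tendsto p).comp hlim⟩

lemma isCompact_limitRange (hΛ : Λ ⊆ closedBall 0 1) (u z : Z) :
    IsCompact (limitRange Λ u z) := by
  rw [limitRange_eq_image hΛ]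
  exact ((isCompact_closedJointRange hΛ u z).inter_right
    (isClosed_eq continuous_fst.norm continuous_const)).image continuous_snd_mul_conj_fst

lemma limitRange_subset_numericalRange (hΛ : Λ ⊆ closedBall 0 1) (hu : ‖u‖ ≤ 1) (z : Z) :
    limitRange Λ u z ⊆ numericalRange 𝕜 u z := by
  rw [limitRange_eq_image hΛ, numericalRange_eq_image hu]
  rintro _ ⟨p, ⟨hp, hp1⟩, rfl⟩
  obtain ⟨φ, hφ, rfl⟩ := closedJointRange_subset_image_closedBall hΛ u z hp
  replace hp1 : ‖φ u‖ = 1 := hp1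
  refine ⟨(starRingEnd 𝕜) (φ u) • φ, ⟨?_, ?_⟩, mul_comm _ _⟩
  · simpa [norm_smul, hp1] using hφ
  · simp [RCLike.conj_mul, hp1]

lemma IsOneNorming.nonempty (hΛ : IsOneNorming Λ) (hu : ‖u‖ ≠ 0) : Λ.Nonempty := by
  by_contra hempty
  have norm_eq := hΛ.norm_eq_sSup u
  rw [Set.not_nonempty_iff_eq_empty.1 hempty, Set.image_empty, Real.sSup_empty] at norm_eq
  exact hu norm_eq

lemma IsOneNorming.exists_norm_add_smul_le (hΛ : IsOneNorming Λ) (hu : ‖u‖ ≠ 0) (z : Z) (a : 𝕜) :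
    ∃ p ∈ closedJointRange Λ u z, ‖u + a • z‖ ≤ ‖p.1 + a * p.2‖ := by
  obtain ⟨p, hp, hmax⟩ := (isCompact_closedJointRange hΛ.subset_closedBall u z).exists_isMaxOn
    ((hΛ.nonempty hu).image _).closure
    (f := fun p : 𝕜 × 𝕜 => ‖p.1 + a * p.2‖) (by fun_prop)
  refine ⟨p, hp, ?_⟩
  rw [hΛ.norm_eq_sSup]
  refine Real.sSup_le ?_ (norm_nonneg _)
  rintro _ ⟨ψ, hψ, rfl⟩
  simpa using hmax (subset_closure ⟨ψ, hψ, rfl⟩)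

lemma one_add_re_le_norm_add_smul {z : Z} {α : 𝕜} (hα : α ∈ numericalRange 𝕜 u z) (a : 𝕜) :
    1 + RCLike.re (a * α) ≤ ‖u + a • z‖ := by
  obtain ⟨φ, hφ, hφu, rfl⟩ := hα
  calc 1 + RCLike.re (a * φ z) = RCLike.re (φ (u + a • z)) := by simp [hφu]
    _ ≤ ‖φ (u + a • z)‖ := RCLike.re_le_norm _
    _ ≤ ‖u + a • z‖ := by simpa using φ.le_of_opNorm_le hφ.le (u + a • z)

lemma IsOneNorming.exists_re_le_add_sq (hΛ : IsOneNorming Λ) (hu : ‖u‖ = 1) {z : Z} {α : 𝕜}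
    (hα : α ∈ numericalRange 𝕜 u z) (a : 𝕜) :
    ∃ p ∈ closedJointRange Λ u z, 1 - 2 * (‖a‖ * ‖z‖) ≤ ‖p.1‖ ∧
      RCLike.re (a * α) ≤
        RCLike.re (a * (p.2 * (starRingEnd 𝕜) p.1)) + (‖a‖ * ‖z‖) ^ 2 / 2 := by
  obtain ⟨p, hp, hle⟩ := hΛ.exists_norm_add_smul_le (hu.trans_ne one_ne_zero) z a
  obtain ⟨hp1, hp2⟩ := norm_le_of_mem_closedJointRange hΛ.subset_closedBall hp
  have hmul : ‖a‖ * ‖p.2‖ ≤ ‖a‖ * ‖z‖ := by gcongr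
  refine ⟨p, hp, ?_, ?_⟩
  · have lower : 1 - ‖a‖ * ‖z‖ ≤ ‖u + a • z‖ := by
      simpa [hu, norm_smul] using norm_sub_le_norm_add u (a • z)
    have upper : ‖p.1 + a * p.2‖ ≤ ‖p.1‖ + ‖a‖ * ‖p.2‖ := by
      simpa using norm_add_le p.1 (a * p.2)
    linarith
  · have lower : 1 + 2 * RCLike.re (a * α) ≤ ‖p.1 + a * p.2‖ ^ 2 := by
      linarith [one_add_re_le_norm_add_smul hα a, two_mul_le_add_sq ‖p.1 + a * p.2‖ 1]
    have hp1_sq : ‖p.1‖ ^ 2 ≤ 1 := pow_le_one₀ (norm_nonneg _) (hp1.trans_eq hu)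
    have hmul_sq : (‖a‖ * ‖p.2‖) ^ 2 ≤ (‖a‖ * ‖z‖) ^ 2 := by gcongr
    rw [norm_add_mul_sq] at lower
    linarith

lemma IsOneNorming.exists_mem_limitRange_re_le (hΛ : IsOneNorming Λ) (hu : ‖u‖ = 1) {z : Z} {α : 𝕜}
    (hα : α ∈ numericalRange 𝕜 u z) (c : 𝕜) :
    ∃ β ∈ limitRange Λ u z, RCLike.re (c * α) ≤ RCLike.re (c * β) := by
  let t (n : ℕ) : ℝ := 1 / ((n : ℝ) + 1)
  have t_pos (n) : 0 < t n := by positivity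
  have t_tendsto : Tendsto t atTop (𝓝 0) := tendsto_one_div_add_atTop_nhds_zero_nat
  have exists_pair (n) : ∃ p ∈ closedJointRange Λ u z,
      1 - 2 * (t n * (‖c‖ * ‖z‖)) ≤ ‖p.1‖ ∧ RCLike.re (c * α) ≤
        RCLike.re (c * (p.2 * (starRingEnd 𝕜) p.1)) + t n * (‖c‖ * ‖z‖) ^ 2 / 2 := by
    obtain ⟨p, hp, hnorm, hre⟩ := hΛ.exists_re_le_add_sq hu hα ((t n : 𝕜) * c)
    simp only [norm_mul, RCLike.norm_of_nonneg (t_pos n).le, mul_assoc, RCLike.re_ofReal_mul]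
      at hnorm hre
    refine ⟨p, hp, hnorm, le_of_mul_le_mul_left ?_ (t_pos n)⟩
    linarith
  choose p hp hnorm hre using exists_pair
  obtain ⟨q, hq, k, hk, hlim⟩ :=
    (isCompact_closedJointRange hΛ.subset_closedBall u z).tendsto_subseq hp
  have tk_tendsto : Tendsto (t ∘ k) atTop (𝓝 0) := t_tendsto.comp hk.tendsto_atTop
  have one_le_norm : 1 ≤ ‖q.1‖ := by
    refine le_of_tendsto_of_tendsto' ?_ ((continuous_fst.norm.tendsto q).comp hlim)
      fun n => hnorm (k n)
    simpa using ((tk_tendsto.mul_const (‖c‖ * ‖z‖)).const_mul 2).const_sub 1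
  have norm_le_one : ‖q.1‖ ≤ 1 :=
    (norm_le_of_mem_closedJointRange hΛ.subset_closedBall hq).1.trans_eq hu
  rw [limitRange_eq_image hΛ.subset_closedBall]
  refine ⟨_, ⟨q, ⟨hq, norm_le_one.antisymm one_le_norm⟩, rfl⟩, ?_⟩
  have continuous_re_mul :
      Continuous fun p : 𝕜 × 𝕜 => RCLike.re (c * (p.2 * (starRingEnd 𝕜) p.1)) :=
    RCLike.continuous_re.comp (continuous_snd_mul_conj_fst.const_mul c)
  have rhs_tendsto : Tendsto (fun n => RCLike.re (c * ((p (k n)).2 * (starRingEnd 𝕜) (p (k n)).1)) +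
      t (k n) * (‖c‖ * ‖z‖) ^ 2 / 2) atTop (𝓝 (RCLike.re (c * (q.2 * (starRingEnd 𝕜) q.1)))) := by
    simpa using ((continuous_re_mul.tendsto q).comp hlim).add
      ((tk_tendsto.mul_const ((‖c‖ * ‖z‖) ^ 2)).div_const 2)
  exact ge_of_tendsto' rhs_tendsto fun n => hre (k n)

theorem numerical_range_eq_convexHull_one_norming_general (hu : ‖u‖ = 1) (hΛ : IsOneNorming Λ)
    (z : Z) : numericalRange 𝕜 u z = convexHull ℝ (limitRange Λ u z) := by
  refine Set.Subset.antisymm (fun α hα => ?_) ?_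
  · exact mem_convexHull_of_forall_exists_re_le (isCompact_limitRange hΛ.subset_closedBall u z)
      (hΛ.exists_mem_limitRange_re_le hu hα)
  · exact convexHull_min (limitRange_subset_numericalRange hΛ.subset_closedBall hu.le z)
      (convex_numericalRange hu.le z)

end NumericalRange

/-- If `Λ ⊆ B_{Z*}` is one-norming for `Z`, then the abstract numerical range `V(Z,u,z)`
equals the convex hull of the limits `lim ψ_n z * conj (ψ_n u)` over sequences `(ψ_n)` in `Λ`
with `|ψ_n u| → 1`. -/
theorem numerical_range_eq_convexHull_one_norming {𝕜 : Type*} [RCLike 𝕜] {Z : Type*}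
    [NormedAddCommGroup Z] [NormedSpace 𝕜 Z] [CompleteSpace Z]
    (u : Z) (hu : ‖u‖ = 1) (Λ : Set (Z →L[𝕜] 𝕜)) (hΛ1 : Λ ⊆ Metric.closedBall 0 1)
    (hΛ : ∀ w : Z, ‖w‖ = sSup ((fun φ : Z →L[𝕜] 𝕜 => ‖φ w‖) '' Λ))
    (z : Z) :
    {α : 𝕜 | ∃ φ : Z →L[𝕜] 𝕜, ‖φ‖ = 1 ∧ φ u = 1 ∧ φ z = α} =
      convexHull ℝ {α : 𝕜 | ∃ ψ : ℕ → Z →L[𝕜] 𝕜, (∀ n, ψ n ∈ Λ) ∧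
        Tendsto (fun n => ‖ψ n u‖) atTop (𝓝 1) ∧
        Tendsto (fun n => ψ n z * (starRingEnd 𝕜) (ψ n u)) atTop (𝓝 α)} :=
  numerical_range_eq_convexHull_one_norming_general hu ⟨hΛ1, hΛ⟩ z
end

section
/- Let Z be a Banach space over 𝕂 (𝕂 = ℝ or ℂ) and let u ∈ Z with ‖u‖ = 1 be a spear vector of Z. Then no smooth point z₀ of Z is Birkhoff-James orthogonal to u; that is, if z₀ is a smooth point of Z, then there exists λ ∈ 𝕂 with ‖z₀ + λu‖ < ‖z₀‖. -/
open Filter Topology Metric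

/-!
If `z₀` is Birkhoff-James orthogonal to `u`, then by Hahn-Banach in the quotient by the line through
`u` some support functional of `z₀` vanishes at `u`. The spear equality `‖u + θ • z₀‖ = ‖u‖ + ‖z₀‖`
forces every norm-one functional attaining its norm at `u + θ • z₀` to attain it at both summands,
which yields a support functional of `z₀` of modulus `‖u‖` at `u`. At a smooth point the two
functionals would coincide.
-/

section

variable {𝕜 : Type*} [RCLike 𝕜] {E F : Type*}
  [SeminormedAddCommGroup E] [NormedSpace 𝕜 E] [SeminormedAddCommGroup F] [NormedSpace 𝕜 F]

variable (𝕜) in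
/-- Birkhoff-James orthogonality of `x` to `y`: no step in the direction of `y` shortens `x`. -/
def BirkhoffJamesOrthogonal (x y : E) : Prop :=
  ∀ c : 𝕜, ‖x‖ ≤ ‖x + c • y‖

/-- `φ` is a support functional of `x`: it has norm one and attains its norm at `x`, with a
nonnegative real value. -/
def IsSupportFunctional (φ : StrongDual 𝕜 E) (x : E) : Prop :=
  ‖φ‖ = 1 ∧ φ x = (‖x‖ : 𝕜)

variable (𝕜) in
/-- `x` is a smooth point: it has exactly one support functional. In a seminormed space, being
nonzero is read as having nonzero norm. -/
def IsSmoothPoint (x : E) : Prop :=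
  ‖x‖ ≠ 0 ∧ ∃! φ : StrongDual 𝕜 E, IsSupportFunctional φ x

namespace IsSupportFunctional

theorem of_norm_le_re {φ : StrongDual 𝕜 E} {x : E} (hφ : ‖φ‖ = 1)
    (h : ‖x‖ ≤ RCLike.re (φ x)) : IsSupportFunctional φ x := by
  have hle : ‖φ x‖ ≤ ‖x‖ := by simpa [hφ] using φ.le_opNorm x
  have hre : RCLike.re (φ x) = ‖x‖ := le_antisymm ((RCLike.re_le_norm _).trans hle) h
  exact ⟨hφ, by rw [← RCLike.re_eq_self_of_le (hle.trans h), hre]⟩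

theorem of_norm_le_one {φ : StrongDual 𝕜 E} {x : E} (hx : ‖x‖ ≠ 0) (hφ : ‖φ‖ ≤ 1)
    (h : φ x = (‖x‖ : 𝕜)) : IsSupportFunctional φ x := by
  refine ⟨le_antisymm hφ ?_, h⟩
  simpa [h, hx] using φ.ratio_le_opNorm x

theorem comp {φ : StrongDual 𝕜 F} {T : E →L[𝕜] F} {x : E} (hφ : IsSupportFunctional φ (T x))
    (hT : ‖T‖ ≤ 1) (hTx : ‖T x‖ = ‖x‖) (hx : ‖x‖ ≠ 0) : IsSupportFunctional (φ ∘L T) x := by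
  refine of_norm_le_one hx ?_ (by rw [ContinuousLinearMap.comp_apply, hφ.2, hTx])
  calc ‖φ ∘L T‖ ≤ ‖φ‖ * ‖T‖ := φ.opNorm_comp_le T
    _ ≤ 1 := by rwa [hφ.1, one_mul]

theorem smul {φ : StrongDual 𝕜 E} {x : E} {θ : 𝕜} (hθ : ‖θ‖ = 1)
    (hφ : IsSupportFunctional φ (θ • x)) : IsSupportFunctional (θ • φ) x := by
  refine ⟨by rw [norm_smul, hθ, hφ.1, one_mul], ?_⟩
  rw [smul_apply, ← map_smul, hφ.2, norm_smul, hθ, one_mul]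

end IsSupportFunctional

theorem exists_isSupportFunctional_of_norm_add_eq {x y : E} (hx : ‖x‖ ≠ 0)
    (h : ‖x + y‖ = ‖x‖ + ‖y‖) :
    ∃ φ : StrongDual 𝕜 E, IsSupportFunctional φ x ∧ IsSupportFunctional φ y := by
  have hxy : ‖x + y‖ ≠ 0 := by
    rw [h]
    positivity
  obtain ⟨φ, hφ, hφxy⟩ := exists_dual_vector 𝕜 (x + y) hxy
  have hle (z : E) : RCLike.re (φ z) ≤ ‖z‖ :=
    (RCLike.re_le_norm _).trans (by simpa [hφ] using φ.le_opNorm z)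
  have hsum : RCLike.re (φ x) + RCLike.re (φ y) = ‖x‖ + ‖y‖ := by
    rw [← map_add, ← map_add, hφxy, RCLike.ofReal_re, h]
  exact ⟨φ, .of_norm_le_re hφ (by linarith [hle y]), .of_norm_le_re hφ (by linarith [hle x])⟩

namespace BirkhoffJamesOrthogonal

theorem norm_mkQL_span_singleton {x y : E} (h : BirkhoffJamesOrthogonal 𝕜 x y) :
    ‖(Submodule.span 𝕜 {y}).mkQL x‖ = ‖x‖ := by
  refine le_antisymm (Submodule.Quotient.norm_mk_le _ x) ?_
  refine QuotientAddGroup.le_norm_iff.2 fun m hm => ?_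
  obtain ⟨c, hc⟩ := Submodule.mem_span_singleton.1 ((Submodule.Quotient.eq _).1 hm)
  simpa only [hc, add_sub_cancel] using h c

theorem exists_isSupportFunctional_apply_eq_zero {x y : E} (hx : ‖x‖ ≠ 0)
    (h : BirkhoffJamesOrthogonal 𝕜 x y) :
    ∃ φ : StrongDual 𝕜 E, IsSupportFunctional φ x ∧ φ y = 0 := by
  set π := (Submodule.span 𝕜 {y}).mkQL
  have hπ : ‖π‖ ≤ 1 := π.opNorm_le_bound zero_le_one fun z =>
    (Submodule.Quotient.norm_mk_le _ z).trans_eq (one_mul ‖z‖).symm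
  have hπx : ‖π x‖ = ‖x‖ := h.norm_mkQL_span_singleton
  have hπy : π y = 0 :=
    (Submodule.Quotient.mk_eq_zero _).2 (Submodule.mem_span_singleton_self y)
  obtain ⟨g, hg⟩ := exists_dual_vector 𝕜 (π x) (hπx ▸ hx)
  exact ⟨g ∘L π, IsSupportFunctional.comp hg hπ hπx hx,
    by rw [ContinuousLinearMap.comp_apply, hπy, map_zero]⟩

end BirkhoffJamesOrthogonal

theorem smooth_point_not_BJ_orthogonal_to_spear_general {x u : E} (hx : IsSmoothPoint 𝕜 x)
    (hu : ‖u‖ ≠ 0) (hadd : ∃ θ : 𝕜, ‖θ‖ = 1 ∧ ‖u + θ • x‖ = ‖u‖ + ‖x‖) :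
    ¬ BirkhoffJamesOrthogonal 𝕜 x u := by
  intro horth
  obtain ⟨φ, hφx, hφu⟩ := horth.exists_isSupportFunctional_apply_eq_zero hx.1
  obtain ⟨θ, hθ, hadd⟩ := hadd
  obtain ⟨ψ, hψu, hψx⟩ := exists_isSupportFunctional_of_norm_add_eq (𝕜 := 𝕜) (y := θ • x) hu
    (by rw [hadd, norm_smul, hθ, one_mul])
  have hφψ : φ = θ • ψ := hx.2.unique hφx (hψx.smul hθ)
  have hnorm : ‖φ u‖ = ‖u‖ := by
    rw [hφψ, smul_apply, norm_smul, hθ, one_mul, hψu.2, RCLike.norm_ofReal, abs_norm]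
  exact hu (by rw [← hnorm, hφu, norm_zero])

end

/-- No smooth point of a Banach space can be Birkhoff-James orthogonal to a spear vector. -/
theorem smooth_point_not_BJ_orthogonal_to_spear {𝕜 : Type*} [RCLike 𝕜] {Z : Type*}
    [NormedAddCommGroup Z] [NormedSpace 𝕜 Z] [CompleteSpace Z]
    (u : Z) (hu : ‖u‖ = 1)
    (hspear : ∀ z : Z, ∃ θ : 𝕜, ‖θ‖ = 1 ∧ ‖u + θ • z‖ = 1 + ‖z‖)
    (z₀ : Z) (hz₀ : z₀ ≠ 0)
    (hsmooth : ∃! φ : Z →L[𝕜] 𝕜, ‖φ‖ = 1 ∧ φ z₀ = (‖z₀‖ : 𝕜)) :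
    ∃ lam : 𝕜, ‖z₀ + lam • u‖ < ‖z₀‖ := by
  simpa only [BirkhoffJamesOrthogonal, not_forall, not_le] using
    smooth_point_not_BJ_orthogonal_to_spear_general ⟨norm_ne_zero_iff.2 hz₀, hsmooth⟩
      (by simp [hu]) (by simpa only [hu] using hspear z₀)
end

section
/- Let X be a complex reflexive Banach space, let Y be a complex Banach space, and let T, A : X → Y be compact linear operators such that the norm attainment set M_T = { x ∈ S_X : ‖Tx‖ = ‖T‖ } is connected. Then T ⊥_B A (with respect to the operator norm) if and only if for every γ ∈ 𝕋 there exists x ∈ M_T such that Tx ⊥_γ Ax. -/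
open Filter Topology Metric

/-!
In each direction `γ` separately, `T ⊥_γ A` holds if and only if some `x ∈ M_T` satisfies
`T x ⊥_γ A x`; the theorem follows by letting `γ` vary. Reflexivity and compactness make
`K = {(T x, A x) : ‖x‖ ≤ 1}` compact. If `T ⊥_γ A`, then for each `t > 0` the set of `(u, v) ∈ K`
with `‖u + tγv‖ ≥ ‖T‖` is nonempty, and by convexity of the norm it grows with `t`, so
these sets have a common point as `t → 0`. This point is `(T x, A x)` with `x ∈ M_T` such that the
norm of `T x + tγ A x` is at least `‖T x‖` for every `t ≥ 0`. The direction `-γ` likewise gives a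
point of `M_T` for `t ≤ 0`. The points of `M_T` of these two kinds form closed sets covering `M_T`,
again by convexity, so connectedness of `M_T` provides a point of both kinds.
-/

section Reflexive

variable {𝕜 X Y : Type*} [RCLike 𝕜] [NormedAddCommGroup X] [NormedSpace 𝕜 X]
  [NormedAddCommGroup Y] [NormedSpace 𝕜 Y]

theorem isCompact_toWeakSpace_image_closedBall
    (hrefl : Function.Surjective (NormedSpace.inclusionInDoubleDual 𝕜 X)) (r : ℝ) :
    IsCompact (toWeakSpace 𝕜 X '' closedBall 0 r) := by
  have hball := (NormedSpace.inclusionInDoubleDualLi 𝕜 (E := X)).preimage_closedBall 0 r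
  rw [LinearIsometry.map_zero] at hball
  rw [LinearEquiv.image_eq_preimage_symm, ← hball]
  exact (NormedSpace.isEmbedding_inclusionInDoubleDualWeak 𝕜 X).isCompact_preimage'
    (WeakDual.isCompact_closedBall 0 r) fun φ _ => hrefl (WeakDual.toStrongDual φ)

theorem isClosed_image_closedBall_of_reflexive
    (hrefl : Function.Surjective (NormedSpace.inclusionInDoubleDual 𝕜 X)) (T : X →L[𝕜] Y) (r : ℝ) :
    IsClosed (T '' closedBall 0 r) := by
  have hweak : IsClosed (WeakSpace.map T '' (toWeakSpace 𝕜 X '' closedBall 0 r)) :=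
    ((isCompact_toWeakSpace_image_closedBall hrefl r).image (WeakSpace.map T).continuous).isClosed
  convert hweak.preimage (toWeakSpaceCLM 𝕜 Y).continuous
  rw [Set.image_image]
  rfl

theorem isCompact_image_closedBall_of_reflexive
    (hrefl : Function.Surjective (NormedSpace.inclusionInDoubleDual 𝕜 X))
    {T : X →L[𝕜] Y} (hT : IsCompactOperator T) (r : ℝ) : IsCompact (T '' closedBall 0 r) := by
  rw [← (isClosed_image_closedBall_of_reflexive hrefl T r).closure_eq]
  exact hT.isCompact_closure_image_closedBall r

end Reflexive

theorem isCompactOperator_prodMk {M N P : Type*} [Zero M] [TopologicalSpace M]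
    [TopologicalSpace N] [TopologicalSpace P] {f : M → N} {g : M → P}
    (hf : IsCompactOperator f) (hg : IsCompactOperator g) :
    IsCompactOperator fun x => (f x, g x) := by
  obtain ⟨K, hK, hfK⟩ := hf
  obtain ⟨L, hL, hgL⟩ := hg
  exact ⟨K ×ˢ L, hK.prod hL, inter_mem hfK hgL⟩

section DirectionalOrthogonality

variable {𝕜 E : Type*} [RCLike 𝕜] [SeminormedAddCommGroup E] [NormedSpace 𝕜 E]

variable (𝕜) in
/-- Birkhoff-James orthogonality `x ⊥_B y` over the scalar field `𝕜`. -/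
def BirkhoffOrthogonal (x y : E) : Prop :=
  ∀ c : 𝕜, ‖x‖ ≤ ‖x + c • y‖

/-- Orthogonality `x ⊥_γ y` in the direction `γ`, defined for every scalar `γ`. -/
def DirectionalOrthogonal (γ : 𝕜) (x y : E) : Prop :=
  ∀ r : ℝ, ‖x‖ ≤ ‖x + ((r : 𝕜) * γ) • y‖

/-- The cone `x_γ⁺` of vectors `y` for which `x ⊥_γ y` holds along the half-line `t ≥ 0`, used to
split `x ⊥_γ y` into two closed conditions. The opposite half-line is encoded as `x_{-γ}⁺`. -/
def directionalCone (γ : 𝕜) (x : E) : Set E :=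
  {y | ∀ t : ℝ, 0 ≤ t → ‖x‖ ≤ ‖x + ((t : 𝕜) * γ) • y‖}

theorem birkhoffOrthogonal_iff_forall_directionalOrthogonal {x y : E} :
    BirkhoffOrthogonal 𝕜 x y ↔ ∀ γ : 𝕜, ‖γ‖ = 1 → DirectionalOrthogonal γ x y := by
  refine ⟨fun h γ _ r => h (r * γ), fun h c => ?_⟩
  rcases eq_or_ne c 0 with rfl | hc
  · simp
  have hnorm : (‖c‖ : 𝕜) ≠ 0 := by simpa using hc
  have hpolar : (‖c‖ : 𝕜) * (c / ‖c‖) = c := mul_div_cancel₀ c hnorm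
  simpa only [hpolar] using h (c / ‖c‖) (by simp [hc]) ‖c‖

theorem directionalOrthogonal_iff_mem_directionalCone {γ : 𝕜} {x y : E} :
    DirectionalOrthogonal γ x y ↔ y ∈ directionalCone γ x ∧ y ∈ directionalCone (-γ) x := by
  refine ⟨fun h => ⟨fun t _ => h t, fun t _ => by simpa using h (-t)⟩, fun h r => ?_⟩
  rcases le_total 0 r with hr | hr
  · exact h.1 r hr
  · simpa using h.2 (-r) (neg_nonneg.2 hr)

theorem convexOn_norm_add_smul (γ : 𝕜) (x y : E) :
    ConvexOn ℝ Set.univ fun t : ℝ => ‖x + ((t : 𝕜) * γ) • y‖ := by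
  refine ⟨convex_univ, fun s _ t _ a b ha hb hab => ?_⟩
  have hab' : (a : 𝕜) + b = 1 := by exact_mod_cast hab
  have hcomb : x + (((a • s + b • t : ℝ) : 𝕜) * γ) • y
      = (a : 𝕜) • (x + ((s : 𝕜) * γ) • y) + (b : 𝕜) • (x + ((t : 𝕜) * γ) • y) := by
    push_cast [smul_eq_mul]
    linear_combination (norm := module) -(hab' • x)
  calc ‖x + (((a • s + b • t : ℝ) : 𝕜) * γ) • y‖
      ≤ ‖(a : 𝕜) • (x + ((s : 𝕜) * γ) • y)‖ + ‖(b : 𝕜) • (x + ((t : 𝕜) * γ) • y)‖ :=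
        hcomb ▸ norm_add_le _ _
    _ = a • ‖x + ((s : 𝕜) * γ) • y‖ + b • ‖x + ((t : 𝕜) * γ) • y‖ := by
        simp only [norm_smul, RCLike.norm_of_nonneg ha, RCLike.norm_of_nonneg hb, smul_eq_mul]

theorem mem_directionalCone_or_mem_directionalCone_neg (γ : 𝕜) (x y : E) :
    y ∈ directionalCone γ x ∨ y ∈ directionalCone (-γ) x := by
  by_contra! h
  simp only [directionalCone, Set.mem_ofPred_eq, not_forall, not_le] at h
  obtain ⟨⟨a, ha, hxa⟩, b, hb, hxb⟩ := h
  have hmax := (convexOn_norm_add_smul γ x y).le_max_of_mem_Icc (Set.mem_univ (-b))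
    (Set.mem_univ a) (z := 0) ⟨neg_nonpos.2 hb, ha⟩
  simp only [RCLike.ofReal_zero, zero_mul, zero_smul, add_zero, RCLike.ofReal_neg] at hmax
  rw [neg_mul_comm] at hmax
  exact hmax.not_gt (max_lt hxb hxa)

theorem norm_add_smul_le_norm_add_smul_of_norm_le {γ : 𝕜} {x y : E} {s t : ℝ} (hs : 0 < s)
    (hst : s ≤ t) (h : ‖x‖ ≤ ‖x + ((s : 𝕜) * γ) • y‖) :
    ‖x + ((s : 𝕜) * γ) • y‖ ≤ ‖x + ((t : 𝕜) * γ) • y‖ := by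
  rcases hst.eq_or_lt with rfl | hst
  · exact le_rfl
  refine (convexOn_norm_add_smul γ x y).le_right_of_left_le (Set.mem_univ 0) (Set.mem_univ t)
    (openSegment_eq_Ioo (hs.trans hst) ▸ ⟨hs, hst⟩) ?_
  simpa using h

theorem isClosed_setOf_mem_directionalCone (γ : 𝕜) :
    IsClosed {p : E × E | p.2 ∈ directionalCone γ p.1} := by
  change IsClosed {p : E × E | ∀ t : ℝ, 0 ≤ t → ‖p.1‖ ≤ ‖p.1 + ((t : 𝕜) * γ) • p.2‖}
  simp only [Set.ofPred_forall]
  exact isClosed_iInter fun t => isClosed_iInter fun _ => isClosed_le (by fun_prop) (by fun_prop)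

end DirectionalOrthogonality

theorem exists_mem_norm_eq_and_mem_directionalCone {𝕜 E : Type*} [RCLike 𝕜]
    [NormedAddCommGroup E] [NormedSpace 𝕜 E] {K : Set (E × E)} (hK : IsCompact K) {c : ℝ}
    (hKc : ∀ p ∈ K, ‖p.1‖ ≤ c) {γ : 𝕜}
    (h : ∀ t : ℝ, 0 < t → ∃ p ∈ K, c ≤ ‖p.1 + ((t : 𝕜) * γ) • p.2‖) :
    ∃ p ∈ K, ‖p.1‖ = c ∧ p.2 ∈ directionalCone γ p.1 := by
  let F : Set.Ioi (0 : ℝ) → Set (E × E) :=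
    fun t => K ∩ {p | c ≤ ‖p.1 + (((t : ℝ) : 𝕜) * γ) • p.2‖}
  have hFmono : Monotone F := fun s t hst p hp =>
    ⟨hp.1, hp.2.trans (norm_add_smul_le_norm_add_smul_of_norm_le s.2 hst
      ((hKc p hp.1).trans hp.2))⟩
  have hFcompact : ∀ t, IsCompact (F t) := fun t =>
    hK.inter_right (isClosed_le (by fun_prop) (by fun_prop))
  obtain ⟨p, hp⟩ := IsCompact.nonempty_iInter_of_directed_nonempty_isCompact_isClosed F
    hFmono.directed_ge (fun t => h t t.2) hFcompact fun t => (hFcompact t).isClosed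
  rw [Set.mem_iInter] at hp
  have hpK : p ∈ K := (hp ⟨1, Set.mem_Ioi.2 one_pos⟩).1
  have hle : ∀ t : ℝ, 0 ≤ t → c ≤ ‖p.1 + ((t : 𝕜) * γ) • p.2‖ := by
    have hclosed : IsClosed {t : ℝ | c ≤ ‖p.1 + ((t : 𝕜) * γ) • p.2‖} :=
      isClosed_le (by fun_prop) (by fun_prop)
    have hpos : closure (Set.Ioi 0) ⊆ {t : ℝ | c ≤ ‖p.1 + ((t : 𝕜) * γ) • p.2‖} :=
      closure_minimal (fun s hs => (hp ⟨s, hs⟩).2) hclosed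
    rwa [closure_Ioi] at hpos
  have hnorm : ‖p.1‖ = c := (hKc p hpK).antisymm (by simpa using hle 0 le_rfl)
  exact ⟨p, hpK, hnorm, fun t ht => hnorm.trans_le (hle t ht)⟩

section NormAttainment

variable {𝕜 X Y : Type*} [RCLike 𝕜] [NormedAddCommGroup X] [NormedSpace 𝕜 X]
  [NormedAddCommGroup Y] [NormedSpace 𝕜 Y]

/-- The norm attainment set `M_T`: the unit vectors at which `T` attains its operator norm. -/
def normAttainmentSet (T : X →L[𝕜] Y) : Set X :=
  {x | ‖x‖ = 1 ∧ ‖T x‖ = ‖T‖}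

theorem mem_normAttainmentSet_of_norm_le_one {T : X →L[𝕜] Y} (hT : T ≠ 0) {x : X} (hx : ‖x‖ ≤ 1)
    (hTx : ‖T x‖ = ‖T‖) : x ∈ normAttainmentSet T := by
  refine ⟨hx.antisymm (le_of_mul_le_mul_left ?_ (norm_pos_iff.2 hT)), hTx⟩
  simpa only [mul_one, hTx] using T.le_opNorm x

theorem exists_norm_le_one_and_norm_apply_eq_opNorm
    (hrefl : Function.Surjective (NormedSpace.inclusionInDoubleDual 𝕜 X))
    {T : X →L[𝕜] Y} (hT : IsCompactOperator T) : ∃ x, ‖x‖ ≤ 1 ∧ ‖T x‖ = ‖T‖ := by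
  obtain ⟨_, ⟨x, hx, rfl⟩, hmax⟩ := (isCompact_image_closedBall_of_reflexive hrefl hT 1)
    |>.exists_sSup_image_eq ((nonempty_closedBall.2 zero_le_one).image T)
      continuous_norm.continuousOn
  rw [Set.image_image, T.sSup_unitClosedBall_eq_norm] at hmax
  exact ⟨x, mem_closedBall_zero_iff.1 hx, hmax.symm⟩

theorem exists_mem_normAttainmentSet_mem_directionalCone
    (hrefl : Function.Surjective (NormedSpace.inclusionInDoubleDual 𝕜 X))
    {T A : X →L[𝕜] Y} (hT : IsCompactOperator T) (hA : IsCompactOperator A) (hT0 : T ≠ 0) {γ : 𝕜}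
    (h : A ∈ directionalCone γ T) :
    ∃ x ∈ normAttainmentSet T, A x ∈ directionalCone γ (T x) := by
  have hK := isCompact_image_closedBall_of_reflexive hrefl (T := T.prod A)
    (isCompactOperator_prodMk hT hA) 1
  have hKT : ∀ p ∈ T.prod A '' closedBall 0 1, ‖p.1‖ ≤ ‖T‖ := by
    rintro _ ⟨x, hx, rfl⟩
    exact T.unit_le_opNorm x (mem_closedBall_zero_iff.1 hx)
  have hKA : ∀ t : ℝ, 0 < t →
      ∃ p ∈ T.prod A '' closedBall 0 1, ‖T‖ ≤ ‖p.1 + ((t : 𝕜) * γ) • p.2‖ := by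
    intro t ht
    obtain ⟨x, hx, hxt⟩ := exists_norm_le_one_and_norm_apply_eq_opNorm hrefl
      (T := T + ((t : 𝕜) * γ) • A) (hT.add (hA.smul ((t : 𝕜) * γ)))
    exact ⟨_, ⟨x, mem_closedBall_zero_iff.2 hx, rfl⟩, (h t ht.le).trans_eq hxt.symm⟩
  obtain ⟨_, ⟨x, hx, rfl⟩, hTx, hAx⟩ := exists_mem_norm_eq_and_mem_directionalCone hK hKT hKA
  exact ⟨x, mem_normAttainmentSet_of_norm_le_one hT0 (mem_closedBall_zero_iff.1 hx) hTx, hAx⟩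

theorem directionalOrthogonal_of_apply {T A : X →L[𝕜] Y} {γ : 𝕜} {x : X}
    (hx : x ∈ normAttainmentSet T) (h : DirectionalOrthogonal γ (T x) (A x)) :
    DirectionalOrthogonal γ T A := fun r =>
  hx.2.ge.trans ((h r).trans ((T + ((r : 𝕜) * γ) • A).unit_le_opNorm x hx.1.le))

theorem directionalOrthogonal_iff_exists_mem_normAttainmentSet
    (hrefl : Function.Surjective (NormedSpace.inclusionInDoubleDual 𝕜 X))
    {T A : X →L[𝕜] Y} (hT : IsCompactOperator T) (hA : IsCompactOperator A)
    (hM : IsConnected (normAttainmentSet T)) {γ : 𝕜} :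
    DirectionalOrthogonal γ T A ↔
      ∃ x ∈ normAttainmentSet T, DirectionalOrthogonal γ (T x) (A x) := by
  refine ⟨fun h => ?_, fun ⟨x, hx, hxγ⟩ => directionalOrthogonal_of_apply hx hxγ⟩
  rcases eq_or_ne T 0 with rfl | hT0
  · obtain ⟨x, hx⟩ := hM.nonempty
    exact ⟨x, hx, fun r => by simp⟩
  have hclosed (δ : 𝕜) : IsClosed {x : X | A x ∈ directionalCone δ (T x)} :=
    (isClosed_setOf_mem_directionalCone δ).preimage (T.continuous.prodMk A.continuous)
  have ⟨hpos, hneg⟩ := directionalOrthogonal_iff_mem_directionalCone.1 h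
  obtain ⟨x, hx, hxγ⟩ := isPreconnected_closed_iff.1 hM.isPreconnected _ _
    (hclosed γ) (hclosed (-γ))
    (fun x _ => mem_directionalCone_or_mem_directionalCone_neg γ (T x) (A x))
    (exists_mem_normAttainmentSet_mem_directionalCone hrefl hT hA hT0 hpos)
    (exists_mem_normAttainmentSet_mem_directionalCone hrefl hT hA hT0 hneg)
  exact ⟨x, hx, directionalOrthogonal_iff_mem_directionalCone.2 hxγ⟩

end NormAttainment

theorem BhatiaSemrl_compact_operators_complex_general {𝕜 X Y : Type*} [RCLike 𝕜]
    [NormedAddCommGroup X] [NormedSpace 𝕜 X] [NormedAddCommGroup Y] [NormedSpace 𝕜 Y]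
    (hrefl : Function.Surjective (NormedSpace.inclusionInDoubleDual 𝕜 X))
    (T A : X →L[𝕜] Y) (hT : IsCompactOperator T) (hA : IsCompactOperator A)
    (hM : IsConnected (normAttainmentSet T)) :
    BirkhoffOrthogonal 𝕜 T A ↔
      ∀ γ : 𝕜, ‖γ‖ = 1 → ∃ x ∈ normAttainmentSet T, DirectionalOrthogonal γ (T x) (A x) :=
  birkhoffOrthogonal_iff_forall_directionalOrthogonal.trans <| forall₂_congr fun _ _ =>
    directionalOrthogonal_iff_exists_mem_normAttainmentSet hrefl hT hA hM

/-- Bhatia-Šemrl type theorem for compact operators on a complex reflexive Banach space: if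
the norm attainment set `M_T` is connected, then `T ⊥_B A` iff for every unimodular `γ` there
is `x ∈ M_T` with `T x ⊥_γ A x` (directional orthogonality). -/
theorem BhatiaSemrl_compact_operators_complex {X Y : Type*}
    [NormedAddCommGroup X] [NormedSpace ℂ X] [CompleteSpace X]
    [NormedAddCommGroup Y] [NormedSpace ℂ Y] [CompleteSpace Y]
    (hrefl : Function.Surjective (NormedSpace.inclusionInDoubleDual ℂ X))
    (T A : X →L[ℂ] Y) (hT : IsCompactOperator T) (hA : IsCompactOperator A)
    (hM : IsConnected {x : X | ‖x‖ = 1 ∧ ‖T x‖ = ‖T‖}) :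
    (∀ lam : ℂ, ‖T + lam • A‖ ≥ ‖T‖) ↔
      ∀ γ : ℂ, ‖γ‖ = 1 → ∃ x : X, ‖x‖ = 1 ∧ ‖T x‖ = ‖T‖ ∧
        ∀ r : ℝ, ‖T x + ((r : ℂ) * γ) • A x‖ ≥ ‖T x‖ := by
  simpa only [normAttainmentSet, Set.mem_ofPred_eq, and_assoc] using!
    BhatiaSemrl_compact_operators_complex_general hrefl T A hT hA hM
end
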